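/- Let μ₀ ≥ 1, let X'' ∈ ℝ^{m''×2} with m'' ≥ 1 and rows x''_1,…,x''_{m''} be μ₀-complex in the ℓ₀ sense, and let c_1,…,c_{m''} ∈ (0, 1/2) with E ≥ max_ℓ ln(1/c_ℓ). Define f₂(X''β) = ∑_{i=1}^{m''} h_{c_i}(x''_i·β). Then for every ℓ ∈ [m''] and every β ∈ ℝ²: h_{c_ℓ}(x''_ℓ·β) ≤ (3.5·E·(1+μ₀)/m'')·f₂(X''β). Consequently, m''·(3.5·E·(1+μ₀)/m'') = 3.5·E·(1+μ₀) bounds the sum over ℓ ∈ [m''] of these sensitivity upper bounds. -/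

import Mathlib

/-!
Every summand is at most `ln(1/c) ≤ E`, and every summand with a nonpositive argument is at least
`h_c(0) = ln(2/(1+c)) ≥ ln(4/3) ≥ 2/7 = 1/3.5`. Complexity says that at least a `1/(1+μ)` fraction
of the rows has a negative product with `β ≠ 0`, and for `β = 0` all products vanish. In both cases
`f₂ ≥ (2/7)·m/(1+μ)`, and dividing the upper bound `E` by this gives the claim.
-/

open Finset Matrix

/-- `h_c(z) = -ln(c + (1-c)/(1+e^{-z}))`. -/
noncomputable def hfun (c z : ℝ) : ℝ := -Real.log (c + (1 - c) / (1 + Real.exp (-z)))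

/-- The rows `x` are `μ₀`-complex in the ℓ₀ sense. -/
def Mu0Complex {ι : Type} [Fintype ι] {d : ℕ} (x : ι → Fin d → ℝ) (μ : ℝ) : Prop :=
  ∀ η : Fin d → ℝ, η ≠ 0 →
    ((Finset.univ.filter fun i => 0 ≤ x i ⬝ᵥ η).card : ℝ) ≤
      μ * ((Finset.univ.filter fun i => x i ⬝ᵥ η < 0).card : ℝ)

section hfun

variable {c : ℝ}

lemma hfun_eq_neg_log_sigmoid (c z : ℝ) :
    hfun c z = -Real.log (c + (1 - c) * Real.sigmoid z) := by
  rw [hfun, Real.sigmoid_def, div_eq_mul_inv]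

lemma add_one_sub_mul_sigmoid_pos (hc : 0 ≤ c) (z : ℝ) : 0 < c + (1 - c) * Real.sigmoid z :=
  calc 0 < Real.sigmoid z + c * (1 - Real.sigmoid z) :=
        add_pos_of_pos_of_nonneg (Real.sigmoid_pos z)
          (mul_nonneg hc (sub_nonneg.2 (Real.sigmoid_le_one z)))
    _ = c + (1 - c) * Real.sigmoid z := by ring

lemma hfun_nonneg (hc₀ : 0 ≤ c) (hc₁ : c ≤ 1) (z : ℝ) : 0 ≤ hfun c z := by
  have hle : c + (1 - c) * Real.sigmoid z ≤ 1 := by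
    linarith [mul_le_of_le_one_right (sub_nonneg.2 hc₁) (Real.sigmoid_le_one z)]
  rw [hfun_eq_neg_log_sigmoid]
  exact neg_nonneg.2 (Real.log_nonpos (add_one_sub_mul_sigmoid_pos hc₀ z).le hle)

lemma hfun_le_log_one_div (hc₀ : 0 < c) (hc₁ : c ≤ 1) (z : ℝ) :
    hfun c z ≤ Real.log (1 / c) := by
  have hle : c ≤ c + (1 - c) * Real.sigmoid z :=
    le_add_of_nonneg_right (mul_nonneg (sub_nonneg.2 hc₁) (Real.sigmoid_nonneg z))
  rw [hfun_eq_neg_log_sigmoid, one_div, Real.log_inv]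
  exact neg_le_neg (Real.log_le_log hc₀ hle)

lemma antitone_hfun (hc₀ : 0 ≤ c) (hc₁ : c ≤ 1) : Antitone (hfun c) := by
  intro z w hzw
  have hσ : Real.sigmoid z ≤ Real.sigmoid w := Real.sigmoid_monotone hzw
  rw [hfun_eq_neg_log_sigmoid, hfun_eq_neg_log_sigmoid]
  refine neg_le_neg (Real.log_le_log (add_one_sub_mul_sigmoid_pos hc₀ z) ?_)
  gcongr

lemma hfun_zero (c : ℝ) : hfun c 0 = Real.log (2 / (1 + c)) := by
  rw [hfun_eq_neg_log_sigmoid, Real.sigmoid_zero, ← Real.log_inv, ← inv_div]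
  ring_nf

lemma two_sevenths_le_log_four_thirds : (2 / 7 : ℝ) ≤ Real.log (4 / 3) := by
  -- `2x / (x + 2) ≤ log (1 + x)` at `x = 1 / 3`.
  have h := Real.le_log_one_add_of_nonneg (x := 1 / 3) (by norm_num)
  norm_num at h
  exact h

lemma two_sevenths_le_hfun (hc₀ : 0 ≤ c) (hc₁ : c ≤ 1 / 2) {z : ℝ} (hz : z ≤ 0) :
    2 / 7 ≤ hfun c z :=
  calc (2 / 7 : ℝ) ≤ Real.log (4 / 3) := two_sevenths_le_log_four_thirds
    _ ≤ Real.log (2 / (1 + c)) := by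
        refine Real.log_le_log (by norm_num) ?_
        rw [le_div_iff₀ (by linarith)]
        linarith
    _ = hfun c 0 := (hfun_zero c).symm
    _ ≤ hfun c z := antitone_hfun hc₀ (by linarith) hz

end hfun

namespace Mu0Complex

variable {ι : Type} [Fintype ι] {d : ℕ} {x : ι → Fin d → ℝ} {μ : ℝ}

-- Counting zero products as well is what allows `β = 0`, which complexity excludes.
lemma card_le_mul_card_nonpos (hx : Mu0Complex x μ) (hμ : 0 ≤ μ) (β : Fin d → ℝ) :
    (Fintype.card ι : ℝ) ≤ (1 + μ) * #{i | x i ⬝ᵥ β ≤ 0} := by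
  rcases eq_or_ne β 0 with rfl | hβ
  · simpa using le_mul_of_one_le_left (Nat.cast_nonneg (Fintype.card ι)) (by linarith)
  · have hsplit : (Fintype.card ι : ℝ) = #{i | x i ⬝ᵥ β < 0} + #{i | 0 ≤ x i ⬝ᵥ β} := by
      simpa only [not_lt, card_univ, Nat.cast_add] using congrArg (Nat.cast (R := ℝ))
        (card_filter_add_card_filter_not (s := univ) fun i ↦ x i ⬝ᵥ β < 0).symm
    calc (Fintype.card ι : ℝ) = #{i | x i ⬝ᵥ β < 0} + #{i | 0 ≤ x i ⬝ᵥ β} := hsplit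
      _ ≤ #{i | x i ⬝ᵥ β < 0} + μ * #{i | x i ⬝ᵥ β < 0} := by gcongr; exact hx β hβ
      _ = (1 + μ) * #{i | x i ⬝ᵥ β < 0} := by ring
      _ ≤ (1 + μ) * #{i | x i ⬝ᵥ β ≤ 0} := by
          gcongr with i
          exact le_of_lt

lemma card_mul_le_mul_sum (hx : Mu0Complex x μ) (hμ : 0 ≤ μ) {g : ι → ℝ → ℝ} {t : ℝ}
    (ht : 0 ≤ t) (hg : ∀ i z, 0 ≤ g i z) (htg : ∀ i, ∀ z ≤ 0, t ≤ g i z) (β : Fin d → ℝ) :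
    Fintype.card ι * t ≤ (1 + μ) * ∑ i, g i (x i ⬝ᵥ β) := by
  have hsum : #{i | x i ⬝ᵥ β ≤ 0} * t ≤ ∑ i, g i (x i ⬝ᵥ β) :=
    calc #{i | x i ⬝ᵥ β ≤ 0} * t ≤ ∑ i with x i ⬝ᵥ β ≤ 0, g i (x i ⬝ᵥ β) := by
          rw [← nsmul_eq_mul]
          exact card_nsmul_le_sum _ _ _ fun i hi ↦ htg i _ (mem_filter.1 hi).2
      _ ≤ ∑ i, g i (x i ⬝ᵥ β) := sum_le_univ_sum_of_nonneg fun i ↦ hg i _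
  calc Fintype.card ι * t ≤ (1 + μ) * #{i | x i ⬝ᵥ β ≤ 0} * t := by
        gcongr
        exact hx.card_le_mul_card_nonpos hμ β
    _ = (1 + μ) * (#{i | x i ⬝ᵥ β ≤ 0} * t) := mul_assoc _ _ _
    _ ≤ (1 + μ) * ∑ i, g i (x i ⬝ᵥ β) := by gcongr

lemma card_le_mul_sum_hfun (hx : Mu0Complex x μ) (hμ : 0 ≤ μ) {c : ι → ℝ}
    (hc : ∀ i, 0 ≤ c i ∧ c i ≤ 1 / 2) (β : Fin d → ℝ) :
    Fintype.card ι ≤ 3.5 * (1 + μ) * ∑ i, hfun (c i) (x i ⬝ᵥ β) := by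
  have h := hx.card_mul_le_mul_sum hμ (g := fun i ↦ hfun (c i)) (t := 2 / 7) (by norm_num)
    (fun i ↦ hfun_nonneg (hc i).1 (by linarith [(hc i).2]))
    (fun i _ ↦ two_sevenths_le_hfun (hc i).1 (hc i).2) β
  linarith

end Mu0Complex

theorem stmt14_general {ι : Type} [Fintype ι] [Nonempty ι] {d : ℕ} {x : ι → Fin d → ℝ} {μ : ℝ}
    (hμ : 0 ≤ μ) (hx : Mu0Complex x μ) {c : ι → ℝ} (hc : ∀ i, 0 < c i ∧ c i ≤ 1 / 2)
    {E : ℝ} (hE : ∀ i, Real.log (1 / c i) ≤ E) :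
    (∀ (ℓ : ι) (β : Fin d → ℝ), hfun (c ℓ) (x ℓ ⬝ᵥ β) ≤
        3.5 * E * (1 + μ) / Fintype.card ι * ∑ i, hfun (c i) (x i ⬝ᵥ β)) ∧
      Fintype.card ι * (3.5 * E * (1 + μ) / Fintype.card ι) = 3.5 * E * (1 + μ) := by
  have hcard : (0 : ℝ) < Fintype.card ι := Nat.cast_pos.2 Fintype.card_pos
  refine ⟨fun ℓ β ↦ ?_, mul_div_cancel₀ _ hcard.ne'⟩
  have hc₁ : c ℓ ≤ 1 := by linarith [(hc ℓ).2]
  have hle : hfun (c ℓ) (x ℓ ⬝ᵥ β) ≤ E := (hfun_le_log_one_div (hc ℓ).1 hc₁ _).trans (hE ℓ)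
  have hE₀ : 0 ≤ E := (hfun_nonneg (hc ℓ).1.le hc₁ _).trans hle
  rw [div_mul_eq_mul_div, le_div_iff₀ hcard]
  calc hfun (c ℓ) (x ℓ ⬝ᵥ β) * Fintype.card ι
      ≤ E * (3.5 * (1 + μ) * ∑ i, hfun (c i) (x i ⬝ᵥ β)) := by
        gcongr
        exact hx.card_le_mul_sum_hfun hμ (fun i ↦ ⟨(hc i).1.le, (hc i).2⟩) β
    _ = 3.5 * E * (1 + μ) * ∑ i, hfun (c i) (x i ⬝ᵥ β) := by ring

/-- Sensitivity bound for the sigmoid summands: each satisfies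
`h_{c_ℓ}(x''_ℓ·β) ≤ (3.5·E·(1+μ₀)/m'')·f₂(X''β)`, and summing the upper bounds over
`ℓ ∈ [m'']` gives `3.5·E·(1+μ₀)`. -/
theorem stmt14 {m'' : ℕ} (hm : 1 ≤ m'') (μ0 : ℝ) (hμ : 1 ≤ μ0)
    (X'' : Fin m'' → Fin 2 → ℝ) (hX : Mu0Complex X'' μ0)
    (c : Fin m'' → ℝ) (hc : ∀ i, 0 < c i ∧ c i < 1 / 2)
    (E : ℝ) (hE : ∀ i, Real.log (1 / c i) ≤ E) :
    (∀ (ℓ : Fin m'') (β : Fin 2 → ℝ),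
        hfun (c ℓ) (X'' ℓ ⬝ᵥ β) ≤
          (3.5 * E * (1 + μ0) / (m'' : ℝ)) * ∑ i, hfun (c i) (X'' i ⬝ᵥ β)) ∧
      (m'' : ℝ) * (3.5 * E * (1 + μ0) / (m'' : ℝ)) = 3.5 * E * (1 + μ0) := by
  have : Nonempty (Fin m'') := ⟨⟨0, hm⟩⟩
  simpa only [Fintype.card_fin] using
    stmt14_general (zero_le_one.trans hμ) hX (fun i ↦ ⟨(hc i).1, (hc i).2.le⟩) hE
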